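/- Let (A*,w*) be an optimal solution to the maximin support instance with t*=supp_{w*}(A*), and let (A,w) be a balanced solution with |A|≤k and A≠A*. Then, for any constant a with 0<a≤1 satisfying 1/a − 1 + ln a ≥ 1 (in particular a=1/3.15), there exists a candidate c'∈A*∖A with score_{(A,w)}(c') ≥ a·t* ≥ t*/3.15. -/

import Mathlib

/-!
Write `S c = supp w c`, `t = a * tstar` and `D = Astar \ A`. Balancedness of `w` has two local
consequences: a voter `n` who approves some member of `A` spends all of `s n` on `A`
(`balanced_saturated`), and only on the members she approves of least support
(`balanced_supp_le`). So `slack n t = s n * (1 - min 1 (t / m n))`, with `m n` that least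
support.

For `m > 0` let `excess a t m = max 0 (min 1 (t / m) - a)`, a nonincreasing function of `m` that
vanishes for `m ≥ tstar` (written `excess m` below), and let `ψ n = excess (m n)` (`0` if
`n` approves nobody in `A`). Then `slack n t ≥ s n * (1 - a - ψ n)`. Bounding `s n ≥ wstar n c'` and summing over `c' ∈ D` gives

  `∑ c' ∈ D, prescore c' t ≥ (1 - a) * tstar * |D| - ∑ n, ψ n * ∑ c' ∈ D, wstar n c'`.

Now `∑ c' ∈ D, wstar n c' ≤ s n - ∑ c ∈ A ∩ Astar, wstar n c`, while
`∑ n, ψ n * s n = ∑ c ∈ A, S c * excess (S c)`, and each `c ∈ A ∩ Astar` has `wstar`-support at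
least `tstar`, coming from voters with `ψ n ≥ excess (S c)`. Since
`S c * excess (S c) ≤ tstar * excess (S c)`, the members of `A ∩ Astar` contribute nothing, and each
of the at most `|D|` members of `A \ Astar` costs at most `S c * excess (S c) ≤ t * (1 - a)`.
Hence the average prescore over `D` is at least `(1 - a) ^ 2 * tstar`. This is at least
`a * tstar`, because `log a ≤ a - 1` turns `1 / a - 1 + log a ≥ 1` into `(1 - a) ^ 2 ≥ a`.
-/

open Finset

section Defs

variable {V Cand : Type*} [Fintype V] [Fintype Cand] [DecidableEq V] [DecidableEq Cand]

/-- The set `C_n` of candidates approved by voter `n`. -/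
def approves (edge : V → Cand → Prop) [∀ n c, Decidable (edge n c)] (n : V) : Finset Cand :=
  Finset.univ.filter (fun c => edge n c)

/-- The set `N_c` of voters approving candidate `c`. -/
def approvers (edge : V → Cand → Prop) [∀ n c, Decidable (edge n c)] (c : Cand) : Finset V :=
  Finset.univ.filter (fun n => edge n c)

/-- Feasibility of an edge-weight vector: nonnegative, supported on the edges of the
approval graph, and the total weight assigned by each voter is at most her vote strength. -/
def Feasible (edge : V → Cand → Prop) [∀ n c, Decidable (edge n c)]
    (s : V → ℝ) (w : V → Cand → ℝ) : Prop :=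
  (∀ n c, 0 ≤ w n c) ∧ (∀ n c, ¬ edge n c → w n c = 0) ∧
    ∀ n, ∑ c ∈ approves edge n, w n c ≤ s n

/-- The support `supp_w(c)` of a candidate. -/
noncomputable def supp (edge : V → Cand → Prop) [∀ n c, Decidable (edge n c)]
    (w : V → Cand → ℝ) (c : Cand) : ℝ :=
  ∑ n ∈ approvers edge c, w n c

/-- `supp_w(A) = min_{c ∈ A} supp_w(c)`, valued in `EReal` with the convention
`supp_w(∅) = ∞`. -/
noncomputable def suppMin (edge : V → Cand → Prop) [∀ n c, Decidable (edge n c)]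
    (w : V → Cand → ℝ) (A : Finset Cand) : EReal :=
  A.inf (fun c => (supp edge w c : EReal))

/-- `w` is balanced for `A`: among feasible vectors it maximizes the sum of member supports
and, subject to that, minimizes the sum of squared member supports. -/
def BalancedWeight (edge : V → Cand → Prop) [∀ n c, Decidable (edge n c)] (s : V → ℝ)
    (A : Finset Cand) (w : V → Cand → ℝ) : Prop :=
  Feasible edge s w ∧
  (∀ w', Feasible edge s w' → ∑ c ∈ A, supp edge w' c ≤ ∑ c ∈ A, supp edge w c) ∧
  (∀ w', Feasible edge s w' → ∑ c ∈ A, supp edge w' c = ∑ c ∈ A, supp edge w c →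
    ∑ c ∈ A, (supp edge w c) ^ 2 ≤ ∑ c ∈ A, (supp edge w' c) ^ 2)

/-- The slack of voter `n` at threshold `t`, relative to the solution `(A, w)`. -/
noncomputable def slack (edge : V → Cand → Prop) [∀ n c, Decidable (edge n c)] (s : V → ℝ)
    (A : Finset Cand) (w : V → Cand → ℝ) (n : V) (t : ℝ) : ℝ :=
  s n - ∑ c ∈ A ∩ approves edge n, w n c * min 1 (t / supp edge w c)

/-- The pre-score of an unelected candidate `c'` at threshold `t`. -/
noncomputable def prescore (edge : V → Cand → Prop) [∀ n c, Decidable (edge n c)] (s : V → ℝ)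
    (A : Finset Cand) (w : V → Cand → ℝ) (c' : Cand) (t : ℝ) : ℝ :=
  ∑ n ∈ approvers edge c', slack edge s A w n t

/-- `score(c') = max { t ≥ 0 : prescore(c', t) ≥ t }`. -/
noncomputable def score (edge : V → Cand → Prop) [∀ n c, Decidable (edge n c)] (s : V → ℝ)
    (A : Finset Cand) (w : V → Cand → ℝ) (c' : Cand) : ℝ :=
  sSup {t : ℝ | 0 ≤ t ∧ t ≤ prescore edge s A w c' t}

/-- Proportional justified representation for a committee of target size `k`. -/
def PJR (edge : V → Cand → Prop) [∀ n c, Decidable (edge n c)] (s : V → ℝ)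
    (k : ℕ) (A : Finset Cand) : Prop :=
  ¬ ∃ (N' : Finset V) (r : ℕ), 0 < r ∧ r ≤ k ∧
      (r : ℝ) / k * ∑ n, s n ≤ ∑ n ∈ N', s n ∧
      r ≤ (N'.inf (approves edge)).card ∧
      (A ∩ N'.sup (approves edge)).card < r

/-- Parametric proportional justified representation (`t`-PJR). -/
def tPJR (edge : V → Cand → Prop) [∀ n c, Decidable (edge n c)] (s : V → ℝ)
    (A : Finset Cand) (t : ℝ) : Prop :=
  ¬ ∃ (N' : Finset V) (r : ℕ), 0 < r ∧ r ≤ A.card ∧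
      (r : ℝ) * t ≤ ∑ n ∈ N', s n ∧
      r ≤ (N'.inf (approves edge)).card ∧
      (A ∩ N'.sup (approves edge)).card < r

end Defs

section Aux

set_option linter.unusedSectionVars false

variable {V Cand : Type*} [Fintype V] [Fintype Cand] [DecidableEq V] [DecidableEq Cand]

/-! ### Supports, feasibility and changes of a single row -/

lemma supp_eq_sum {edge : V → Cand → Prop} [∀ n c, Decidable (edge n c)]
    {w : V → Cand → ℝ} (h0 : ∀ n c, ¬ edge n c → w n c = 0) (c : Cand) :
    supp edge w c = ∑ n, w n c := by
  unfold supp approvers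
  rw [Finset.sum_filter]
  refine Finset.sum_congr rfl fun n _ => ?_
  split_ifs with h
  · rfl
  · exact (h0 n c h).symm

lemma feasible_row {edge : V → Cand → Prop} [∀ n c, Decidable (edge n c)] {s : V → ℝ}
    {w : V → Cand → ℝ} (h : Feasible edge s w) (n : V) (B : Finset Cand) :
    ∑ c ∈ B, w n c ≤ s n := by
  refine le_trans ?_ (h.2.2 n)
  have h1 : ∑ c ∈ approves edge n, w n c = ∑ c, w n c := by
    unfold approves
    rw [Finset.sum_filter]
    refine Finset.sum_congr rfl fun c _ => ?_
    split_ifs with h'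
    · rfl
    · exact (h.2.1 n c h').symm
  rw [h1]
  exact Finset.sum_le_sum_of_subset_of_nonneg (Finset.subset_univ _) fun c _ _ => h.1 n c

lemma sum_inter_approves {edge : V → Cand → Prop} [∀ n c, Decidable (edge n c)]
    {w : V → Cand → ℝ} (h0 : ∀ n c, ¬ edge n c → w n c = 0) (A : Finset Cand) (n : V)
    (f : Cand → ℝ) :
    ∑ c ∈ A ∩ approves edge n, w n c * f c = ∑ c ∈ A, w n c * f c := by
  refine Finset.sum_subset Finset.inter_subset_left fun c hc hn => ?_
  have : ¬ edge n c := fun h => hn (by simp [approves, hc, h])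
  rw [h0 n c this, zero_mul]

/-- Changing one voter's row keeps feasibility if the new row is feasible. -/
lemma feasible_update {edge : V → Cand → Prop} [∀ n c, Decidable (edge n c)] {s : V → ℝ}
    {w : V → Cand → ℝ} (h : Feasible edge s w) (n : V) (r : Cand → ℝ)
    (hr0 : ∀ c, 0 ≤ r c) (hre : ∀ c, ¬ edge n c → r c = 0) (hrs : ∑ c, r c ≤ s n) :
    Feasible edge s (Function.update w n r) := by
  refine ⟨fun m c => ?_, fun m c hm => ?_, fun m => ?_⟩
  · by_cases e : m = n
    · subst e; simpa using hr0 c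
    · simpa [e] using h.1 m c
  · by_cases e : m = n
    · subst e; simpa using hre c hm
    · simpa [e] using h.2.1 m c hm
  · by_cases e : m = n
    · subst e
      simp only [Function.update_self]
      exact le_trans
        (Finset.sum_le_sum_of_subset_of_nonneg (Finset.subset_univ _) fun c _ _ => hr0 c) hrs
    · simpa [e] using h.2.2 m

lemma supp_update {edge : V → Cand → Prop} [∀ n c, Decidable (edge n c)]
    {w : V → Cand → ℝ} (h0 : ∀ n c, ¬ edge n c → w n c = 0) (n : V) (r : Cand → ℝ)
    (hre : ∀ c, ¬ edge n c → r c = 0) (c : Cand) :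
    supp edge (Function.update w n r) c = supp edge w c + (r c - w n c) := by
  have h0' : ∀ m c, ¬ edge m c → Function.update w n r m c = 0 := by
    intro m c hm
    by_cases e : m = n
    · subst e; simpa using hre c hm
    · simpa [e] using h0 m c hm
  rw [supp_eq_sum h0', supp_eq_sum h0, ← Finset.add_sum_erase _ _ (Finset.mem_univ n),
    ← Finset.add_sum_erase _ (fun m => w m c) (Finset.mem_univ n)]
  have : ∑ m ∈ Finset.univ.erase n, Function.update w n r m c
      = ∑ m ∈ Finset.univ.erase n, w m c :=
    Finset.sum_congr rfl fun m hm => by simp [Finset.ne_of_mem_erase hm]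
  rw [this]
  simp only [Function.update_self]
  ring

/-! ### Local structure of balanced weights -/

/-- Otherwise, giving all of `s n` to a single approved member of `A` would increase the total
support of `A`. -/
lemma balanced_saturated {edge : V → Cand → Prop} [∀ n c, Decidable (edge n c)] {s : V → ℝ}
    (hs : ∀ n, 0 ≤ s n) {A : Finset Cand} {w : V → Cand → ℝ} (h : BalancedWeight edge s A w)
    {n : V} {c₀ : Cand} (hc : c₀ ∈ A) (he : edge n c₀) :
    ∑ c ∈ A, w n c = s n := by
  refine le_antisymm (feasible_row h.1 n A) ?_
  have hre : ∀ c, ¬ edge n c → (Pi.single c₀ (s n) : Cand → ℝ) c = 0 := by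
    intro c hcn
    exact Pi.single_eq_of_ne (fun e => hcn (by rwa [e])) _
  have hf := feasible_update h.1 n (Pi.single c₀ (s n))
    (fun c => by by_cases e : c = c₀ <;> simp [e, hs n]) hre (by simp)
  have := h.2.1 _ hf
  simp only [supp_update h.1.2.1 n _ hre, Finset.sum_add_distrib, Finset.sum_sub_distrib] at this
  have h1 : ∑ c ∈ A, (Pi.single c₀ (s n) : Cand → ℝ) c = s n := by
    simp [Pi.single_apply, hc]
  linarith

/-- Otherwise, moving a little of the weight `w n c` to `d` would preserve the total support of
`A` and decrease the sum of squares. -/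
lemma balanced_supp_le {edge : V → Cand → Prop} [∀ n c, Decidable (edge n c)] {s : V → ℝ}
    {A : Finset Cand} {w : V → Cand → ℝ} (h : BalancedWeight edge s A w)
    {n : V} {c d : Cand} (hc : c ∈ A) (hd : d ∈ A) (he : edge n d) (hw : 0 < w n c) :
    supp edge w c ≤ supp edge w d := by
  by_contra! hlt
  have hec : edge n c := by
    by_contra hh
    exact hw.ne' (h.1.2.1 n c hh)
  have hcd : c ≠ d := by rintro rfl; exact lt_irrefl _ hlt
  obtain ⟨ε, hε, hε1, hε2⟩ : ∃ ε : ℝ, 0 < ε ∧ ε ≤ w n c ∧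
      ε < supp edge w c - supp edge w d := by
    refine ⟨min (w n c) ((supp edge w c - supp edge w d) / 2), ?_, min_le_left _ _, ?_⟩
    · exact lt_min hw (by linarith)
    · exact lt_of_le_of_lt (min_le_right _ _) (by linarith)
  let δ : Cand → ℝ := fun x => (if x = d then ε else 0) - (if x = c then ε else 0)
  have hδc : δ c = -ε := by simp [δ, hcd]
  have hδd : δ d = ε := by simp [δ, hcd.symm]
  have hδ : ∀ x, x ≠ c → x ≠ d → δ x = 0 := fun x h1 h2 => by simp [δ, h1, h2]
  have hδA : ∑ x ∈ A, δ x = 0 := by simp [δ, Finset.sum_sub_distrib, hc, hd]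
  have hδu : ∑ x, δ x = 0 := by simp [δ, Finset.sum_sub_distrib]
  have hre : ∀ x, ¬ edge n x → w n x + δ x = 0 := by
    intro x hx
    rw [h.1.2.1 n x hx, hδ x (fun e => hx (e ▸ hec)) (fun e => hx (e ▸ he)), add_zero]
  have hf := feasible_update h.1 n (fun x => w n x + δ x) (fun x => by
      have := h.1.1 n x
      by_cases e : x = c
      · subst e; rw [hδc]; linarith
      · by_cases e' : x = d
        · subst e'; rw [hδd]; linarith
        · rw [hδ x e e']; linarith) hre (by
      rw [Finset.sum_add_distrib, hδu, add_zero]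
      exact feasible_row h.1 n _)
  have hS : ∀ x, supp edge (Function.update w n fun x => w n x + δ x) x
      = supp edge w x + δ x := by
    intro x
    rw [supp_update h.1.2.1 n _ hre]
    ring
  have key := h.2.2 _ hf (by simp only [hS, Finset.sum_add_distrib, hδA, add_zero])
  simp only [hS] at key
  have hdiff : ∑ x ∈ A, ((supp edge w x + δ x) ^ 2 - supp edge w x ^ 2)
      = ((supp edge w c + δ c) ^ 2 - supp edge w c ^ 2)
        + ((supp edge w d + δ d) ^ 2 - supp edge w d ^ 2) := by
    rw [← Finset.sum_pair (f := fun x => (supp edge w x + δ x) ^ 2 - supp edge w x ^ 2) hcd]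
    symm
    refine Finset.sum_subset ?_ ?_
    · intro x hx
      rcases Finset.mem_insert.1 hx with rfl | hx
      · exact hc
      · rwa [Finset.mem_singleton.1 hx]
    · intro x _ hx
      simp only [Finset.mem_insert, Finset.mem_singleton, not_or] at hx
      rw [hδ x hx.1 hx.2]
      ring
  rw [Finset.sum_sub_distrib, hδc, hδd] at hdiff
  nlinarith

/-! ### The excess function -/

/-- The part above `a` of the fraction `min 1 (t / m)` of its incoming weight that a candidate of
support `m` needs to keep support `t`. At `m = 0` this fraction is taken to be `1`, rather than
`min 1 (t / 0) = 0`, so that the function is nonincreasing on `m ≥ 0`. -/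
noncomputable def excess (a t m : ℝ) : ℝ :=
  if m ≤ 0 then 1 - a else max 0 (min 1 (t / m) - a)

lemma excess_nonneg {a t m : ℝ} (ha1 : a ≤ 1) : 0 ≤ excess a t m := by
  unfold excess
  split_ifs
  · linarith
  · exact le_max_left _ _

lemma excess_le {a t m : ℝ} (ha1 : a ≤ 1) : excess a t m ≤ 1 - a := by
  unfold excess
  split_ifs
  · exact le_rfl
  · exact max_le (by linarith) (by linarith [min_le_left 1 (t / m)])

lemma excess_anti {a t m m' : ℝ} (ha1 : a ≤ 1) (ht : 0 ≤ t) (h : m ≤ m') :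
    excess a t m' ≤ excess a t m := by
  by_cases hm : m ≤ 0
  · have : excess a t m = 1 - a := by simp [excess, hm]
    rw [this]
    exact excess_le ha1
  · have hm0 : 0 < m := not_le.1 hm
    have hm' : ¬ m' ≤ 0 := by linarith
    simp only [excess, hm, hm', if_false]
    gcongr

lemma min_le_excess_add {a t m : ℝ} (hm : 0 < m) : min 1 (t / m) ≤ excess a t m + a := by
  simp only [excess, not_le.2 hm, if_false]
  linarith [le_max_right 0 (min 1 (t / m) - a)]

lemma mul_excess_le {a T m : ℝ} (ha : 0 < a) (ha1 : a ≤ 1) (hT : 0 ≤ T) (hm : 0 ≤ m) :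
    m * excess a (a * T) m ≤ a * T * (1 - a) := by
  have h0 : 0 ≤ a * T * (1 - a) := mul_nonneg (by positivity) (by linarith)
  rcases hm.eq_or_lt with rfl | hm
  · simpa using h0
  · rcases le_total m (a * T) with h | h
    · exact mul_le_mul h (excess_le ha1) (excess_nonneg ha1) (by positivity)
    · simp only [excess, not_le.2 hm, if_false]
      rw [mul_max_of_nonneg _ _ hm.le]
      refine max_le (by simpa using h0) ?_
      have : m * min 1 (a * T / m) ≤ a * T := by
        calc m * min 1 (a * T / m) ≤ m * (a * T / m) := by gcongr; exact min_le_right _ _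
          _ = a * T := by field_simp
      nlinarith

lemma mul_excess_le' {a T m : ℝ} (ha : 0 < a) (ha1 : a ≤ 1) (hT : 0 ≤ T) (hm : 0 ≤ m) :
    m * excess a (a * T) m ≤ T * excess a (a * T) m := by
  rcases le_total m T with h | h
  · exact mul_le_mul_of_nonneg_right h (excess_nonneg ha1)
  · rcases hm.eq_or_lt with rfl | hm
    · obtain rfl : T = 0 := le_antisymm h hT
      exact le_rfl
    · have : excess a (a * T) m = 0 := by
        simp only [excess, not_le.2 hm, if_false]
        refine max_eq_left ?_
        have h1 : a * T / m ≤ a := by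
          rw [div_le_iff₀ hm]; gcongr
        linarith [min_le_right 1 (a * T / m)]
      simp [this]

/-! ### Slack, score and the averaging argument -/

/-- The factor `ψ` is the excess at the least support among the members of `A` approved by `n`,
or `0` if there are none. -/
lemma exists_voter_excess {edge : V → Cand → Prop} [∀ n c, Decidable (edge n c)] {s : V → ℝ}
    (hs : ∀ n, 0 ≤ s n) {A : Finset Cand} {w : V → Cand → ℝ} (h : BalancedWeight edge s A w)
    {a t : ℝ} (ha1 : a ≤ 1) (ht : 0 ≤ t) (n : V) :
    ∃ ψ : ℝ, 0 ≤ ψ ∧ ψ ≤ 1 - a ∧ (∀ c ∈ A, edge n c → excess a t (supp edge w c) ≤ ψ) ∧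
      ∑ c ∈ A, w n c * excess a t (supp edge w c) = s n * ψ := by
  by_cases hA : ∃ c ∈ A, edge n c
  · obtain ⟨c₁, hc₁, he₁⟩ := hA
    obtain ⟨c₀, hc₀, hmin⟩ := Finset.exists_min_image (A.filter fun c => edge n c)
      (supp edge w) ⟨c₁, by simp [hc₁, he₁]⟩
    simp only [Finset.mem_filter] at hc₀ hmin
    refine ⟨excess a t (supp edge w c₀), excess_nonneg ha1, excess_le ha1,
      fun c hc he => excess_anti ha1 ht (hmin c ⟨hc, he⟩), ?_⟩
    rw [← balanced_saturated hs h hc₁ he₁, Finset.sum_mul]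
    refine Finset.sum_congr rfl fun c hc => ?_
    rcases (h.1.1 n c).eq_or_lt with h0 | hpos
    · rw [← h0]; ring
    · have he : edge n c := by
        by_contra hh
        exact hpos.ne' (h.1.2.1 n c hh)
      rw [le_antisymm (balanced_supp_le h hc hc₀.1 hc₀.2 hpos) (hmin c ⟨hc, he⟩)]
  · push Not at hA
    refine ⟨0, le_rfl, by linarith, fun c hc he => absurd he (hA c hc), ?_⟩
    rw [mul_zero]
    exact Finset.sum_eq_zero fun c hc => by rw [h.1.2.1 n c (hA c hc), zero_mul]

lemma slack_ge {edge : V → Cand → Prop} [∀ n c, Decidable (edge n c)] {s : V → ℝ}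
    {A : Finset Cand} {w : V → Cand → ℝ} (h : Feasible edge s w) {a t : ℝ} (ha : 0 < a) (n : V) :
    (1 - a) * s n - ∑ c ∈ A, w n c * excess a t (supp edge w c) ≤ slack edge s A w n t := by
  unfold slack
  rw [sum_inter_approves h.2.1]
  have h1 : ∑ c ∈ A, w n c * min 1 (t / supp edge w c)
      ≤ ∑ c ∈ A, (w n c * excess a t (supp edge w c) + w n c * a) := by
    refine Finset.sum_le_sum fun c _ => ?_
    rcases (h.1 n c).eq_or_lt with h0 | hpos
    · rw [← h0]; simp
    · have : 0 < supp edge w c := by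
        rw [supp_eq_sum h.2.1]
        exact lt_of_lt_of_le hpos
          (Finset.single_le_sum (f := fun n => w n c) (fun m _ => h.1 m c) (Finset.mem_univ n))
      rw [← mul_add]
      exact mul_le_mul_of_nonneg_left (min_le_excess_add this) hpos.le
  rw [Finset.sum_add_distrib, ← Finset.sum_mul] at h1
  nlinarith [feasible_row h n A]

/-- The threshold set defining the score is bounded above by the total vote strength, so the
supremum is not a junk value. -/
lemma le_score {edge : V → Cand → Prop} [∀ n c, Decidable (edge n c)] {s : V → ℝ}
    {A : Finset Cand} {w : V → Cand → ℝ} (h : Feasible edge s w) {c' : Cand} {t : ℝ}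
    (ht : 0 ≤ t) (htp : t ≤ prescore edge s A w c' t) : t ≤ score edge s A w c' := by
  refine le_csSup ⟨∑ n ∈ approvers edge c', s n, ?_⟩ ⟨ht, htp⟩
  rintro x ⟨hx, hxp⟩
  refine hxp.trans (Finset.sum_le_sum fun n _ => ?_)
  unfold slack
  have : 0 ≤ ∑ c ∈ A ∩ approves edge n, w n c * min 1 (x / supp edge w c) := by
    refine Finset.sum_nonneg fun c _ => mul_nonneg (h.1 n c) (le_min zero_le_one ?_)
    exact div_nonneg hx (Finset.sum_nonneg fun m _ => h.1 m c)
  linarith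

/-- The averaging argument, valid for every `a` with `a ≤ (1 - a) ^ 2` and for every feasible
`wstar` giving each member of `Astar` support at least `T`. -/
lemma exists_score_ge {edge : V → Cand → Prop} [∀ n c, Decidable (edge n c)] {s : V → ℝ}
    (hs : ∀ n, 0 ≤ s n) {Astar : Finset Cand} {wstar : V → Cand → ℝ} {T : ℝ}
    (hwstar : Feasible edge s wstar) (hT : 0 ≤ T) (hsupp : ∀ c ∈ Astar, T ≤ supp edge wstar c)
    {A : Finset Cand} {w : V → Cand → ℝ} (h : BalancedWeight edge s A w)
    (hAk : A.card ≤ Astar.card) (hne : A ≠ Astar)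
    {a : ℝ} (ha : 0 < a) (ha1 : a ≤ 1) (ha2 : a ≤ (1 - a) ^ 2) :
    ∃ c' ∈ Astar \ A, a * T ≤ score edge s A w c' := by
  have hDne : (Astar \ A).Nonempty := by
    rw [Finset.sdiff_nonempty]
    intro hsub
    exact hne (Finset.eq_of_subset_of_card_le hsub hAk).symm
  have hcard : ((A \ Astar).card : ℝ) ≤ ((Astar \ A).card : ℝ) := by
    have h1 := Finset.card_sdiff_add_card_inter A Astar
    have h2 := Finset.card_sdiff_add_card_inter Astar A
    rw [Finset.inter_comm] at h2
    exact_mod_cast (by omega : (A \ Astar).card ≤ (Astar \ A).card)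
  have ht : 0 ≤ a * T := by positivity
  have hS0 : ∀ c, 0 ≤ supp edge w c := fun c => Finset.sum_nonneg fun m _ => h.1.1 m c
  choose ψ hψ0 hψ1 hψA hψs using exists_voter_excess hs h ha1 ht
  set E : Cand → ℝ := fun c => excess a (a * T) (supp edge w c) with hE
  have hpre : ∀ c', ∑ n, wstar n c' * (1 - a - ψ n) ≤ prescore edge s A w c' (a * T) := by
    intro c'
    unfold prescore approvers
    rw [Finset.sum_filter]
    refine Finset.sum_le_sum fun n _ => ?_
    split_ifs with hec
    · have h1 := slack_ge (A := A) h.1 (t := a * T) ha n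
      rw [hψs n] at h1
      have h2 : wstar n c' ≤ s n := by simpa using feasible_row hwstar n {c'}
      have h3 := mul_le_mul_of_nonneg_right h2 (sub_nonneg.2 (hψ1 n))
      nlinarith
    · rw [hwstar.2.1 n c' hec, zero_mul]
  -- Total excess of the voters, counted by candidates of `A`.
  have hcount : ∑ n, s n * ψ n = ∑ c ∈ A, supp edge w c * E c := by
    simp only [← hψs]
    rw [Finset.sum_comm]
    refine Finset.sum_congr rfl fun c _ => ?_
    rw [← Finset.sum_mul, ← supp_eq_sum h.1.2.1 c]
  have hinter : ∑ c ∈ A ∩ Astar, T * E c ≤ ∑ n, ψ n * ∑ c ∈ A ∩ Astar, wstar n c := by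
    simp only [Finset.mul_sum]
    rw [Finset.sum_comm]
    refine Finset.sum_le_sum fun c hc => ?_
    rw [Finset.mem_inter] at hc
    calc T * E c ≤ supp edge wstar c * E c :=
          mul_le_mul_of_nonneg_right (hsupp c hc.2) (excess_nonneg ha1)
      _ = ∑ n, wstar n c * E c := by rw [supp_eq_sum hwstar.2.1, Finset.sum_mul]
      _ ≤ ∑ n, ψ n * wstar n c := by
          refine Finset.sum_le_sum fun n _ => ?_
          by_cases hec : edge n c
          · rw [mul_comm]
            exact mul_le_mul_of_nonneg_right (hψA n c hc.1 hec) (hwstar.1 n c)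
          · rw [hwstar.2.1 n c hec]; simp
  have hA : ∑ c ∈ A, supp edge w c * E c - ∑ c ∈ A ∩ Astar, T * E c
      ≤ (Astar \ A).card * (a * T * (1 - a)) := by
    rw [← Finset.sum_inter_add_sum_sdiff A Astar]
    have h1 : ∑ c ∈ A ∩ Astar, supp edge w c * E c ≤ ∑ c ∈ A ∩ Astar, T * E c :=
      Finset.sum_le_sum fun c _ => mul_excess_le' ha ha1 hT (hS0 c)
    have h2 : ∑ c ∈ A \ Astar, supp edge w c * E c ≤ (A \ Astar).card * (a * T * (1 - a)) := by
      rw [← nsmul_eq_mul]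
      exact Finset.sum_le_card_nsmul _ _ _ fun c _ => mul_excess_le ha ha1 hT (hS0 c)
    have h3 := mul_le_mul_of_nonneg_right hcard (mul_nonneg ht (sub_nonneg.2 ha1))
    linarith
  have hrow : ∑ n, ψ n * ∑ c ∈ Astar \ A, wstar n c
      ≤ ∑ n, s n * ψ n - ∑ n, ψ n * ∑ c ∈ A ∩ Astar, wstar n c := by
    rw [← Finset.sum_sub_distrib]
    refine Finset.sum_le_sum fun n _ => ?_
    have h1 := feasible_row hwstar n Astar
    rw [← Finset.sum_inter_add_sum_sdiff Astar A, Finset.inter_comm] at h1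
    nlinarith [mul_le_mul_of_nonneg_left h1 (hψ0 n)]
  have hD : (Astar \ A).card * T ≤ ∑ c ∈ Astar \ A, ∑ n, wstar n c := by
    rw [← nsmul_eq_mul]
    refine Finset.card_nsmul_le_sum _ _ _ fun c hc => ?_
    rw [← supp_eq_sum hwstar.2.1]
    exact hsupp c (Finset.mem_sdiff.1 hc).1
  have hsplit : ∑ c' ∈ Astar \ A, ∑ n, wstar n c' * (1 - a - ψ n)
      = (1 - a) * ∑ c ∈ Astar \ A, ∑ n, wstar n c - ∑ n, ψ n * ∑ c ∈ Astar \ A, wstar n c := by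
    simp only [Finset.mul_sum]
    rw [Finset.sum_comm (s := Finset.univ), ← Finset.sum_sub_distrib]
    refine Finset.sum_congr rfl fun c _ => ?_
    rw [← Finset.sum_sub_distrib]
    exact Finset.sum_congr rfl fun n _ => by ring
  have hmain : ∑ _c' ∈ Astar \ A, a * T
      ≤ ∑ c' ∈ Astar \ A, ∑ n, wstar n c' * (1 - a - ψ n) := by
    rw [hsplit, Finset.sum_const, nsmul_eq_mul]
    have h1 := mul_le_mul_of_nonneg_left hD (sub_nonneg.2 ha1)
    have h2 : (0 : ℝ) ≤ (Astar \ A).card * T := by positivity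
    have h3 := mul_le_mul_of_nonneg_left ha2 h2
    nlinarith
  obtain ⟨c', hc', hle⟩ := Finset.exists_le_of_sum_le hDne hmain
  exact ⟨c', hc', le_score h.1 ht (hle.trans (hpre c'))⟩

end Aux

theorem exists_315_score_candidate
    {V Cand : Type*} [Fintype V] [Fintype Cand] [DecidableEq V] [DecidableEq Cand]
    (edge : V → Cand → Prop) [∀ n c, Decidable (edge n c)]
    (s : V → ℝ) (hs : ∀ n, 0 ≤ s n) (k : ℕ) (hk : 0 < k)
    (Astar : Finset Cand) (wstar : V → Cand → ℝ) (tstar : ℝ)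
    (hwstar : Feasible edge s wstar) (hAstar : Astar.card = k)
    (htstar : suppMin edge wstar Astar = (tstar : EReal))
    (hopt : ∀ (B : Finset Cand) (v : V → Cand → ℝ), Feasible edge s v → B.card = k →
      suppMin edge v B ≤ suppMin edge wstar Astar)
    (A : Finset Cand) (w : V → Cand → ℝ)
    (hbal : BalancedWeight edge s A w) (hAk : A.card ≤ k) (hne : A ≠ Astar)
    (a : ℝ) (ha : 0 < a) (ha1 : a ≤ 1) (hga : 1 ≤ 1 / a - 1 + Real.log a) :
    (∃ c' ∈ Astar \ A, a * tstar ≤ score edge s A w c') ∧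
    (∃ c' ∈ Astar \ A, tstar / 3.15 ≤ score edge s A w c') := by
  have hT : ∀ c ∈ Astar, tstar ≤ supp edge wstar c := by
    intro c hc
    have : suppMin edge wstar Astar ≤ (supp edge wstar c : EReal) := Finset.inf_le hc
    rw [htstar] at this
    exact_mod_cast this
  have hT0 : 0 ≤ tstar := by
    have : ((0 : ℝ) : EReal) ≤ suppMin edge wstar Astar :=
      Finset.le_inf fun c _ => by
        exact_mod_cast Finset.sum_nonneg fun m _ => hwstar.1 m c
    rw [htstar] at this
    exact_mod_cast this
  have ha2 : a ≤ (1 - a) ^ 2 := by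
    have h1 := Real.log_le_sub_one_of_pos ha
    have h2 : 1 ≤ 1 / a - 2 + a := by linarith
    have h3 := mul_le_mul_of_nonneg_left h2 ha.le
    have h4 : a * (1 / a - 2 + a) = 1 - 2 * a + a ^ 2 := by
      field_simp
    nlinarith
  refine ⟨exists_score_ge hs hwstar hT0 hT hbal (by omega) hne ha ha1 ha2, ?_⟩
  obtain ⟨c', hc', h⟩ := exists_score_ge (a := 1 / 3.15) hs hwstar hT0 hT hbal (by omega) hne
    (by norm_num) (by norm_num) (by norm_num)
  exact ⟨c', hc', by rwa [one_div_mul_eq_div] at h⟩
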